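/- Let G be a finite simple graph on a finite vertex set V with edge set E, and let q be a natural number. Then Σ_{A ⊆ E} (−1)^{|A|} q^{K(A)} equals the number of proper colorings of G with q colors, i.e., the number of functions c : V → {1, …, q} such that c(x) ≠ c(y) whenever x and y are adjacent in G. In other words, the specialization of the multivariate Tutte polynomial Z_G(q, v) at v_e = −1 for every edge e equals the chromatic polynomial of G evaluated at q. -/

import Mathlib

/-!
This is Whitney's inclusion–exclusion argument. The number `q ^ K(A)` counts the colorings that are
constant on the components of `(V, A)`, i.e. those for which every edge of `A` is monochromatic
(`card_colorings_mono`). Exchanging the sum over `A` with the sum over colorings `c`, the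
contribution of a fixed `c` is `∑_{A ⊆ E} ∏_{e ∈ A} (-[e is monochromatic])`, which factors as
`∏_{e ∈ E} (1 - [e is monochromatic])` and is therefore `1` if `c` is proper and `0` otherwise.
-/

/-- Colorings that agree along every edge of `H` are the same as colorings of the connected
components of `H`. -/
def coloringsEquivComponents {V α : Type*} (H : SimpleGraph V) :
    {c : V → α // ∀ x y, H.Adj x y → c x = c y} ≃ (H.ConnectedComponent → α) where
  toFun c := SimpleGraph.ConnectedComponent.lift c.1 fun _ _ p hp => by
    clear hp
    induction p with
    | nil => rfl
    | cons h p ih => exact (c.2 _ _ h).trans ih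
  invFun f := ⟨fun v => f (H.connectedComponentMk v), fun _ _ h =>
    congrArg f (SimpleGraph.ConnectedComponent.sound h.reachable)⟩
  left_inv _ := rfl
  right_inv f := by
    funext C
    induction C using SimpleGraph.ConnectedComponent.ind
    rfl

/-- An edge `e` is monochromatic under `c` when its image `e.map c` is diagonal. -/
lemma card_colorings_mono {V : Type*} [Fintype V] [DecidableEq V] (A : Finset (Sym2 V)) (q : ℕ) :
    (Finset.univ.filter fun c : V → Fin q => ∀ e ∈ A, (e.map c).IsDiag).card =
      q ^ Nat.card (SimpleGraph.fromEdgeSet (A : Set (Sym2 V))).ConnectedComponent := by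
  have h := Nat.card_congr (coloringsEquivComponents (α := Fin q)
    (SimpleGraph.fromEdgeSet (A : Set (Sym2 V))))
  rw [Nat.card_fun, Nat.card_fin] at h
  rw [← h, ← Fintype.card_subtype, ← Nat.card_eq_fintype_card]
  refine Nat.card_congr (Equiv.subtypeEquivRight fun c => ?_)
  simp only [Sym2.forall, SimpleGraph.fromEdgeSet_adj, Sym2.map_mk, Sym2.mk_isDiag_iff,
    Finset.mem_coe]
  refine ⟨fun h x y hxy => h x y hxy.1, fun h x y hxy => ?_⟩
  -- `fromEdgeSet` discards loops, along which any coloring agrees trivially.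
  by_cases hne : x = y
  · rw [hne]
  · exact h x y ⟨hxy, hne⟩

/-- **The multivariate Tutte polynomial at `v_e = −1` is the chromatic polynomial.**
Let `G` be a finite simple graph on a finite vertex set `V` with edge set `E`, and let
`q` be a natural number.  Then `Σ_{A ⊆ E} (−1)^{|A|} q^{K(A)}`, where `K(A)` is the
number of connected components of the spanning subgraph `(V, A)`, equals the number of
proper colorings of `G` with `q` colors, i.e. the number of functions `c : V → Fin q`
with `c x ≠ c y` whenever `x` and `y` are adjacent in `G`. -/
theorem tutte_at_neg_one_eq_chromatic {V : Type} [Fintype V] [DecidableEq V]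
    (G : SimpleGraph V) [DecidableRel G.Adj] (q : ℕ) :
    ∑ A ∈ G.edgeFinset.powerset,
        (-1 : ℤ) ^ A.card *
          (q : ℤ) ^ Nat.card (SimpleGraph.fromEdgeSet (A : Set (Sym2 V))).ConnectedComponent =
      (Nat.card {c : V → Fin q // ∀ x y : V, G.Adj x y → c x ≠ c y} : ℤ) := by
  have expand (A : Finset (Sym2 V)) :
      (-1 : ℤ) ^ A.card *
          (q : ℤ) ^ Nat.card (SimpleGraph.fromEdgeSet (A : Set (Sym2 V))).ConnectedComponent =
        ∑ c : V → Fin q, ∏ e ∈ A, -(if (e.map c).IsDiag then (1 : ℤ) else 0) := by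
    rw [← Nat.cast_pow, ← card_colorings_mono, Finset.card_filter, Nat.cast_sum, Finset.mul_sum]
    refine Finset.sum_congr rfl fun c _ => ?_
    rw [Finset.prod_neg, Finset.prod_boole]
    push_cast
    congr
  have proper (c : V → Fin q) :
      ∏ e ∈ G.edgeFinset, (1 + -(if (e.map c).IsDiag then (1 : ℤ) else 0)) =
        if ∀ x y : V, G.Adj x y → c x ≠ c y then 1 else 0 := by
    have h (e : Sym2 V) : (1 + -(if (e.map c).IsDiag then (1 : ℤ) else 0)) =
        if ¬ (e.map c).IsDiag then 1 else 0 := by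
      split_ifs <;> simp_all
    have key : (∀ e ∈ G.edgeFinset, ¬ (e.map c).IsDiag) ↔ ∀ x y : V, G.Adj x y → c x ≠ c y := by
      simp [Sym2.forall]
    simp only [h, Finset.prod_boole, key]
  simp only [expand]
  rw [Finset.sum_comm, Nat.card_eq_fintype_card, Fintype.card_subtype, Finset.card_filter,
    Nat.cast_sum]
  refine Finset.sum_congr rfl fun c _ => ?_
  rw [← Finset.prod_one_add, proper]
  push_cast
  rfl
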